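/- Let z ∈ ℂ^N, h(x) = Σ_{j=1}^N z_j x^{a(j)}, b(1), …, b(n) ∈ A elements forming a basis of ℝ^n with dual basis l_1, …, l_n, α ∈ ℂ^n, h̃(x) = h(x) − Σ_{i=1}^n α_i x^{b(i)}, and g_i(x) = Σ_{j=1}^N l_i(a(j)) z_j x^{a(j)−b(i)}. Suppose x ∈ T = (ℂ*)^n satisfies g_i(x) = α_i for all 1 ≤ i ≤ n (equivalently, x is a critical point of h̃). Then the complex Hessian matrix (∂²h̃/∂x_j∂x_k(x))_{j,k=1}^n is invertible if and only if the Jacobian matrix (∂g_i/∂x_j(x))_{i,j=1}^n is invertible; that is, degenerate critical points of h̃ are exactly the critical points x of the map (g_1, …, g_n) : T → ℂ^n with (g_1(x), …, g_n(x)) = α. -/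

import Mathlib

/-!
The dual basis expands every exponent as `a j = ∑ i, l i (a j) • b i`. On the torus this turns the
logarithmic derivatives `y k * ∂ₖ (y ^ a j) = a j k * y ^ a j` into the identity
`∂ₖ h̃ (y) = ∑ i, (y k)⁻¹ * b i k * y ^ b i * (g i y - α i)` (`pd_htilde`).

Differentiating it at a point where `g i = α i` for all `i`, the terms in which the first factor is
differentiated vanish, so the Hessian is the transpose of `C * J`, where `J` is the Jacobian of `g`
and `C = diag (x k)⁻¹ * (b i k)ₖᵢ * diag (x ^ b i)`. The matrix `C` is invertible: its middle factor
is inverse to the matrix of the dual basis, and its outer factors are nonzero on the torus.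
-/

open scoped BigOperators Classical

noncomputable section

/-- The Laurent monomial `x^m = ∏ i, x i ^ m i` on the torus. -/
def mon {n : ℕ} (m : Fin n → ℤ) (x : Fin n → ℂ) : ℂ := ∏ i, x i ^ m i

/-- The `i`-th partial derivative of a function on `ℂ^n`. -/
def pd {n : ℕ} (i : Fin n) (f : (Fin n → ℂ) → ℂ) (x : Fin n → ℂ) : ℂ :=
  fderiv ℂ f x (Pi.single i 1)

/-- The Laurent polynomial `h_z(x) = ∑ j, z j * x^{a j}`. -/
def laurent {n N : ℕ} (a : Fin N → Fin n → ℤ) (z : Fin N → ℂ) (x : Fin n → ℂ) : ℂ :=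
  ∑ j, z j * mon (a j) x

/-- The perturbed Laurent polynomial `h̃(x) = h(x) − ∑ i, α i * x^{b(i)}`. -/
def htilde {n N : ℕ} (a : Fin N → Fin n → ℤ) (z : Fin N → ℂ) (bv : Fin n → Fin N)
    (α : Fin n → ℂ) (x : Fin n → ℂ) : ℂ :=
  laurent a z x - ∑ i, α i * mon (a (bv i)) x

/-- The Laurent polynomial `g_i(x) = ∑ j, l_i(a(j)) * z j * x^{a(j) - b(i)}`, where
`l_1, …, l_n` is the dual basis of `b(1), …, b(n)`. -/
def gfun {n N : ℕ} (a : Fin N → Fin n → ℤ) (z : Fin N → ℂ) (bv : Fin n → Fin N)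
    (l : Fin n → ((Fin n → ℝ) →ₗ[ℝ] ℝ)) (i : Fin n) (x : Fin n → ℂ) : ℂ :=
  ∑ j, (l i (fun j' => (a j j' : ℝ)) : ℂ) * z j * mon (fun j' => a j j' - a (bv i) j') x

/-- The determinant of the complex Hessian matrix of `f` at `x`. -/
def hessDet {n : ℕ} (f : (Fin n → ℂ) → ℂ) (x : Fin n → ℂ) : ℂ :=
  Matrix.det (Matrix.of fun j k => pd j (fun y => pd k f y) x)

lemma mon_ne_zero {n : ℕ} (m : Fin n → ℤ) {x : Fin n → ℂ} (hx : ∀ i, x i ≠ 0) : mon m x ≠ 0 :=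
  Finset.prod_ne_zero_iff.2 fun i _ => zpow_ne_zero _ (hx i)

lemma mon_mul_mon_sub {n : ℕ} (m p : Fin n → ℤ) {x : Fin n → ℂ} (hx : ∀ i, x i ≠ 0) :
    mon p x * mon (fun k => m k - p k) x = mon m x := by
  unfold mon
  rw [← Finset.prod_mul_distrib]
  refine Finset.prod_congr rfl fun i _ => ?_
  rw [← zpow_add₀ (hx i)]
  congr 1
  ring

lemma differentiableAt_mon {n : ℕ} (m : Fin n → ℤ) {x : Fin n → ℂ} (hx : ∀ i, x i ≠ 0) :
    DifferentiableAt ℂ (mon m) x := by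
  have h (i : Fin n) : DifferentiableAt ℂ (fun y : Fin n → ℂ => y i ^ m i) x :=
    (differentiableAt_apply (𝕜 := ℂ) i x).zpow (Or.inl (hx i))
  unfold mon
  fun_prop

lemma pd_mon {n : ℕ} (m : Fin n → ℤ) {x : Fin n → ℂ} (hx : ∀ i, x i ≠ 0) (k : Fin n) :
    pd k (mon m) x = (x k)⁻¹ * m k * mon m x := by
  have h1 : ∀ i ∈ (Finset.univ : Finset (Fin n)), HasFDerivAt (fun y : Fin n → ℂ => y i ^ m i)
      (((m i : ℂ) * x i ^ (m i - 1)) • (ContinuousLinearMap.proj i : (Fin n → ℂ) →L[ℂ] ℂ)) x :=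
    fun i _ => HasDerivAt.comp_hasFDerivAt (f := fun y : Fin n → ℂ => y i) x
      (hasDerivAt_zpow (m i) (x i) (Or.inl (hx i))) (hasFDerivAt_apply i x)
  have h2 := HasFDerivAt.finsetProd h1
  have h3 : pd k (mon m) x = _ := congrArg (fun L => L (Pi.single k 1)) h2.fderiv
  rw [h3]
  simp only [_root_.sum_apply, _root_.smul_apply,
    ContinuousLinearMap.proj_apply, smul_eq_mul]
  rw [Finset.sum_eq_single k]
  · rw [Pi.single_eq_same, mon, ← Finset.mul_prod_erase _ _ (Finset.mem_univ k),
      zpow_sub_one₀ (hx k)]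
    ring
  · intro i _ hik
    simp [Pi.single_eq_of_ne hik]
  · simp

lemma differentiableAt_gfun {n N : ℕ} (a : Fin N → Fin n → ℤ) (z : Fin N → ℂ) (bv : Fin n → Fin N)
    (l : Fin n → ((Fin n → ℝ) →ₗ[ℝ] ℝ)) (i : Fin n) {x : Fin n → ℂ} (hx : ∀ i, x i ≠ 0) :
    DifferentiableAt ℂ (gfun a z bv l i) x := by
  unfold gfun
  exact DifferentiableAt.fun_sum fun j _ => (differentiableAt_mon _ hx).const_mul _

/-- The matrix of the dual basis is a left inverse of the matrix with columns `b i`. -/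
lemma dual_mul {n N : ℕ} (a : Fin N → Fin n → ℤ) (bv : Fin n → Fin N)
    (l : Fin n → ((Fin n → ℝ) →ₗ[ℝ] ℝ))
    (hdual : ∀ i i', l i (fun j => (a (bv i') j : ℝ)) = if i = i' then 1 else 0) :
    (LinearMap.toMatrix' (LinearMap.pi l)) * (Matrix.of fun k i => (a (bv i) k : ℝ)) = 1 := by
  ext i i'
  have h := congrFun (LinearMap.toMatrix'_mulVec (LinearMap.pi l) fun j => (a (bv i') j : ℝ)) i
  rw [LinearMap.pi_apply, hdual] at h
  rw [Matrix.one_apply, ← h]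
  rfl

/-- The expansion of the exponent `a j` in the basis `b i`, coordinatewise and cast to `ℂ`. -/
lemma expand {n N : ℕ} (a : Fin N → Fin n → ℤ) (bv : Fin n → Fin N)
    (l : Fin n → ((Fin n → ℝ) →ₗ[ℝ] ℝ))
    (hdual : ∀ i i', l i (fun j => (a (bv i') j : ℝ)) = if i = i' then 1 else 0)
    (j : Fin N) (k : Fin n) :
    (a j k : ℂ) = ∑ i, (a (bv i) k : ℂ) * (l i (fun j' => (a j j' : ℝ)) : ℂ) := by
  have h := mul_eq_one_comm.1 (dual_mul a bv l hdual)
  have h2 := congrFun (congrArg (fun M => Matrix.mulVec M fun j' => (a j j' : ℝ)) h) k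
  simp only [← Matrix.mulVec_mulVec, LinearMap.toMatrix'_mulVec, Matrix.one_mulVec] at h2
  have h3 : (a j k : ℝ) = ∑ i, (a (bv i) k : ℝ) * l i (fun j' => (a j j' : ℝ)) := h2.symm
  exact_mod_cast congrArg (fun r : ℝ => (r : ℂ)) h3

/-- On the torus, the gradient of `h̃` is a linear combination of the `g i - α i`. -/
lemma pd_htilde {n N : ℕ} (a : Fin N → Fin n → ℤ) (z : Fin N → ℂ) (bv : Fin n → Fin N)
    (l : Fin n → ((Fin n → ℝ) →ₗ[ℝ] ℝ))
    (hdual : ∀ i i', l i (fun j => (a (bv i') j : ℝ)) = if i = i' then 1 else 0)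
    (α : Fin n → ℂ) {y : Fin n → ℂ} (hy : ∀ i, y i ≠ 0) (k : Fin n) :
    pd k (htilde a z bv α) y =
      ∑ i, ((y k)⁻¹ * a (bv i) k * mon (a (bv i)) y) * (gfun a z bv l i y - α i) := by
  have hm (m : Fin n → ℤ) := (differentiableAt_mon m hy).hasFDerivAt
  have h1 : HasFDerivAt (htilde a z bv α) _ y :=
    (HasFDerivAt.fun_sum (u := Finset.univ) fun j _ => (hm (a j)).const_mul (z j)).fun_sub
      (HasFDerivAt.fun_sum (u := Finset.univ) fun i _ => (hm (a (bv i))).const_mul (α i))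
  have h2 : pd k (htilde a z bv α) y =
      ∑ j, z j * pd k (mon (a j)) y - ∑ i, α i * pd k (mon (a (bv i))) y := by
    rw [pd, h1.fderiv]
    simp [pd]
  have h3 (i : Fin n) : mon (a (bv i)) y * gfun a z bv l i y =
      ∑ j, (l i (fun j' => (a j j' : ℝ)) : ℂ) * z j * mon (a j) y := by
    rw [gfun, Finset.mul_sum]
    refine Finset.sum_congr rfl fun j _ => ?_
    rw [← mon_mul_mon_sub (a j) (a (bv i)) hy]
    ring
  have h4 (i : Fin n) : ((y k)⁻¹ * a (bv i) k * mon (a (bv i)) y) * (gfun a z bv l i y - α i) =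
      ∑ j, (y k)⁻¹ * a (bv i) k * ((l i (fun j' => (a j j' : ℝ)) : ℂ) * z j * mon (a j) y)
        - α i * ((y k)⁻¹ * a (bv i) k * mon (a (bv i)) y) := by
    rw [← Finset.mul_sum, ← h3]
    ring
  rw [h2]
  simp only [h4, pd_mon _ hy]
  rw [Finset.sum_sub_distrib, Finset.sum_comm]
  congr 1
  refine Finset.sum_congr rfl fun j _ => ?_
  rw [expand a bv l hdual j k, Finset.mul_sum, Finset.sum_mul, Finset.mul_sum]
  refine Finset.sum_congr rfl fun i _ => ?_
  ring

/-- At a common zero of the `g i - α i`, the product rule applied to `pd_htilde` leaves only the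
terms in which `g i` is differentiated. -/
lemma pd_pd_htilde {n N : ℕ} (a : Fin N → Fin n → ℤ) (z : Fin N → ℂ) (bv : Fin n → Fin N)
    (l : Fin n → ((Fin n → ℝ) →ₗ[ℝ] ℝ))
    (hdual : ∀ i i', l i (fun j => (a (bv i') j : ℝ)) = if i = i' then 1 else 0)
    (α : Fin n → ℂ) {x : Fin n → ℂ} (hx : ∀ i, x i ≠ 0)
    (hcrit : ∀ i, gfun a z bv l i x = α i) (j k : Fin n) :
    pd j (fun y => pd k (htilde a z bv α) y) x =
      ∑ i, ((x k)⁻¹ * a (bv i) k * mon (a (bv i)) x) * pd j (gfun a z bv l i) x := by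
  have hev : (fun y => pd k (htilde a z bv α) y) =ᶠ[nhds x] fun y =>
      ∑ i, ((y k)⁻¹ * a (bv i) k * mon (a (bv i)) y) * (gfun a z bv l i y - α i) := by
    have hopen : ∀ᶠ y in nhds x, ∀ i, y i ≠ 0 := Filter.eventually_all.2 fun i =>
      (continuous_apply i).continuousAt.eventually_ne (hx i)
    filter_upwards [hopen] with y hy
    exact pd_htilde a z bv l hdual α hy k
  have hC (i : Fin n) : DifferentiableAt ℂ
      (fun y : Fin n → ℂ => (y k)⁻¹ * a (bv i) k * mon (a (bv i)) y) x :=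
    ((DifferentiableAt.fun_inv (h := fun y : Fin n → ℂ => y k)
      (differentiableAt_apply k x) (hx k)).mul_const _).mul (differentiableAt_mon _ hx)
  have hG (i : Fin n) := ((differentiableAt_gfun a z bv l i hx).hasFDerivAt).sub_const (α i)
  have h1 := HasFDerivAt.fun_sum (u := Finset.univ) fun i _ => (hC i).hasFDerivAt.mul (hG i)
  rw [pd, hev.fderiv_eq]
  -- `h1` states the summands as products of functions, equal to the goal only by unfolding.
  erw [h1.fderiv]
  simp [_root_.sum_apply, hcrit, pd]

/-- at a critical point `x ∈ T` of `h̃` (i.e. a solution of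
`g_i(x) = α_i` for all `i`), the complex Hessian matrix of `h̃` is invertible if and
only if the Jacobian matrix `(∂g_i/∂x_j(x))` is invertible. -/
theorem stmt2 {n N : ℕ} (a : Fin N → Fin n → ℤ) (z : Fin N → ℂ)
    (bv : Fin n → Fin N)
    (hbv : LinearIndependent ℝ fun i => fun j => (a (bv i) j : ℝ))
    (l : Fin n → ((Fin n → ℝ) →ₗ[ℝ] ℝ))
    (hdual : ∀ i i', l i (fun j => (a (bv i') j : ℝ)) = if i = i' then 1 else 0)
    (α : Fin n → ℂ)
    (x : Fin n → ℂ) (hx : ∀ i, x i ≠ 0)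
    (hcrit : ∀ i, gfun a z bv l i x = α i) :
    hessDet (htilde a z bv α) x ≠ 0 ↔
      Matrix.det (Matrix.of fun i j => pd j (gfun a z bv l i) x) ≠ 0 := by
  set B : Matrix (Fin n) (Fin n) ℝ := Matrix.of fun k i => (a (bv i) k : ℝ) with hB
  have hBdet : B.det ≠ 0 := by
    have h := congrArg Matrix.det (dual_mul a bv l hdual)
    rw [Matrix.det_mul, Matrix.det_one] at h
    exact right_ne_zero_of_mul_eq_one h
  have hBC : (B.map Complex.ofRealHom).det ≠ 0 := by
    rw [← RingHom.mapMatrix_apply, ← RingHom.map_det]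
    simpa using hBdet
  have hfac : (Matrix.of fun j k => pd j (fun y => pd k (htilde a z bv α) y) x) =
      (Matrix.diagonal (fun k => (x k)⁻¹) * B.map Complex.ofRealHom *
        Matrix.diagonal (fun i => mon (a (bv i)) x) *
        Matrix.of fun i j => pd j (gfun a z bv l i) x).transpose := by
    ext j k
    rw [Matrix.of_apply, pd_pd_htilde a z bv l hdual α hx hcrit, Matrix.transpose_apply,
      Matrix.mul_apply]
    refine Finset.sum_congr rfl fun i _ => ?_
    rw [Matrix.mul_diagonal, Matrix.diagonal_mul]
    simp [hB]
  have h1 : ∏ k, (x k)⁻¹ ≠ 0 := Finset.prod_ne_zero_iff.2 fun k _ => inv_ne_zero (hx k)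
  have h2 : ∏ i, mon (a (bv i)) x ≠ 0 := Finset.prod_ne_zero_iff.2 fun i _ => mon_ne_zero _ hx
  rw [hessDet, hfac, Matrix.det_transpose, Matrix.det_mul, Matrix.det_mul, Matrix.det_mul,
    Matrix.det_diagonal, Matrix.det_diagonal]
  exact mul_ne_zero_iff_left (mul_ne_zero (mul_ne_zero h1 hBC) h2)
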